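/- Let d ≥ 2 and let a = (a_0, …, a_{d+1}) ∈ ℤ^{d+2} be balanced nonzero with a_0 + a_1 ≠ 0, set b = (a_0 + a_1, a_2, …, a_{d+1}) ∈ ℤ^{d+1} and q_b = ∏_{i=0}^{d} b_i^{b_i} (zpow in ℂ). Define G : U → ℂ² by G(z) = (W(z), z_0/z_1). Then for every t ∈ ℂ with t ≠ 0 and every u ∈ ℂ, the following are equivalent: (1) there exists z ∈ U with W(z) = t, z_0/z_1 = u, and the restriction of DG(z) to T has rank at most 1; (2) u ≠ 0, u ≠ −1, and u^{a_0} · (u+1)^{−(a_0+a_1)} = t / q_b (zpow in ℂ). -/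

import Mathlib

lemma aux_prod_zpow {n : ℕ} (c : ℂ) (hc : c ≠ 0) (f : Fin n → ℤ) :
    ∏ i, c ^ f i = c ^ ∑ i, f i := by
  induction n with
  | zero => simp
  | succ n ih => rw [Fin.prod_univ_succ, Fin.sum_univ_succ, zpow_add₀ hc, ih]

lemma aux_value {n : ℕ} (p q c : ℤ) (α : Fin n → ℤ) (hc : c ≠ 0)
    (hs : p + q ≠ 0) (hsum : p + q + ∑ i, α i + c = 0) (u : ℂ) (hu : u ≠ 0) (hu1 : u + 1 ≠ 0) :
    (u * ((p + q : ℤ) / (c * (u + 1)))) ^ p * (((p + q : ℤ) : ℂ) / (c * (u + 1))) ^ q *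
      ∏ i, ((α i : ℂ) / c) ^ α i =
    u ^ p * (u + 1) ^ (-(p + q)) * (((p + q : ℤ) : ℂ) ^ (p + q) *
      ((∏ i, (α i : ℂ) ^ α i) * (c : ℂ) ^ c)) := by
  have hc' : (c : ℂ) ≠ 0 := by exact_mod_cast hc
  have hs' : ((p + q : ℤ) : ℂ) ≠ 0 := by exact_mod_cast hs
  simp_rw [div_zpow]
  rw [Finset.prod_div_distrib, aux_prod_zpow _ hc']
  have h1 : ∑ i, α i = -(p + q) - c := by linarith
  rw [h1, mul_zpow, div_zpow, mul_zpow, mul_zpow, zpow_sub₀ hc', zpow_neg, zpow_neg, zpow_add₀ hc',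
    zpow_add₀ hs', zpow_add₀ hu1]
  have := zpow_ne_zero p hc'
  have := zpow_ne_zero q hc'
  have := zpow_ne_zero c hc'
  have := zpow_ne_zero p hu1
  have := zpow_ne_zero q hu1
  field_simp

lemma aux_fderiv {m : ℕ} (e : Fin m → ℤ) (i0 i1 : Fin m) (z : Fin m → ℂ) (hz : ∀ i, z i ≠ 0)
    (v : Fin m → ℂ) :
    fderiv ℂ (fun z : Fin m → ℂ => (∏ i, z i ^ e i, z i0 / z i1)) z v =
      ((∏ i, z i ^ e i) * ∑ i, e i * v i / z i,
        z i0 / z i1 * (v i0 / z i0 - v i1 / z i1)) := by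
  have hp : ∀ i, HasFDerivAt (fun z : Fin m → ℂ => z i)
      (ContinuousLinearMap.proj (R := ℂ) (φ := fun _ : Fin m => ℂ) i) z :=
    fun i => hasFDerivAt_apply i z
  have h1 : ∀ i, HasFDerivAt (fun z : Fin m → ℂ => z i ^ e i)
      (((e i : ℂ) * z i ^ (e i - 1)) •
        ContinuousLinearMap.proj (R := ℂ) (φ := fun _ : Fin m => ℂ) i) z :=
    fun i => by
      have h := hasDerivAt_zpow (e i) (z i) (Or.inl (hz i))
      exact HasDerivAt.comp_hasFDerivAt (h₂ := fun x : ℂ => x ^ e i) z h (hp i)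
  have h2 := HasFDerivAt.finsetProd (u := Finset.univ) (fun i _ => h1 i)
  have hi : HasFDerivAt (fun z : Fin m → ℂ => (z i1)⁻¹)
      ((-(z i1 ^ 2)⁻¹) • ContinuousLinearMap.proj (R := ℂ) (φ := fun _ : Fin m => ℂ) i1) z :=
    HasDerivAt.comp_hasFDerivAt (h₂ := fun x : ℂ => x⁻¹) z (hasDerivAt_inv (hz i1)) (hp i1)
  have h3 := (hp i0).fun_mul hi
  simp only [← div_eq_mul_inv] at h3
  rw [(h2.prodMk h3).fderiv]
  have := hz i0
  have := hz i1
  ext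
  · simp [Finset.mul_sum]
    refine Finset.sum_congr rfl fun i _ => ?_
    rw [← Finset.mul_prod_erase _ _ (Finset.mem_univ i), zpow_sub_one₀ (hz i)]
    have := hz i
    field_simp
  · simp
    field_simp
    ring

lemma aux_rank {n : ℕ} (k0 : Fin n) (e : Fin (n + 2) → ℤ) (hs : e 0 + e 1 ≠ 0)
    (z : Fin (n + 2) → ℂ) (hz : ∀ i, z i ≠ 0) (T : Submodule ℂ (Fin (n + 2) → ℂ))
    (hT : ∀ v, v ∈ T ↔ ∑ i, v i = 0) :
    Module.rank ℂ ↥(T.map (fderiv ℂ (fun z : Fin (n + 2) → ℂ =>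
      (∏ i, z i ^ e i, z 0 / z 1)) z).toLinearMap) ≤ 1 ↔
    ∃ β : ℂ, (e 0 + e 1 : ℂ) = β * (z 0 + z 1) ∧
      ∀ i : Fin n, (e i.succ.succ : ℂ) = β * z i.succ.succ := by
  have hW : (∏ i, z i ^ e i) ≠ 0 := Finset.prod_ne_zero_iff.2 fun i _ => zpow_ne_zero _ (hz i)
  have hz0 := hz 0
  have hz1 := hz 1
  have hs' : (e 0 + e 1 : ℂ) ≠ 0 := by exact_mod_cast hs
  rw [rank_submodule_le_one_iff']
  constructor
  · rintro ⟨x, hx⟩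
    have key : ∀ k : Fin n, (e 0 + e 1 : ℂ) * z k.succ.succ = e k.succ.succ * (z 0 + z 1) := by
      intro k
      have hzk := hz k.succ.succ
      let v : Fin (n + 2) → ℂ := Fin.cons (z 0) (Fin.cons (z 1) (Pi.single k (-(z 0 + z 1))))
      let w : Fin (n + 2) → ℂ := Fin.cons 1 (Fin.cons 0 (Pi.single k (-1)))
      have hv : v ∈ T := by
        rw [hT]; simp [v, Fin.sum_univ_succ]
      have hw : w ∈ T := by
        rw [hT]; simp [w, Fin.sum_univ_succ]
      have hv' := hx (Submodule.mem_map_of_mem hv)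
      have hw' := hx (Submodule.mem_map_of_mem hw)
      rw [Submodule.mem_span_singleton] at hv' hw'
      obtain ⟨r, hr⟩ := hv'
      obtain ⟨s, hs⟩ := hw'
      simp only [ContinuousLinearMap.coe_coe] at hr hs
      rw [aux_fderiv e 0 1 z hz] at hr hs
      have v0 : v 0 = z 0 := rfl
      have v1 : v 1 = z 1 := rfl
      have w0 : w 0 = 1 := rfl
      have w1 : w 1 = 0 := rfl
      have hr1 := congrArg Prod.fst hr
      have hr2 := congrArg Prod.snd hr
      have hs2 := congrArg Prod.snd hs
      simp only [Prod.smul_fst, Prod.smul_snd, smul_eq_mul, v0, v1, w0, w1] at hr1 hr2 hs2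
      rw [div_self hz0, div_self hz1, sub_self, mul_zero] at hr2
      have hx2 : x.2 ≠ 0 := by
        intro h
        rw [h] at hs2
        field_simp at hs2
        simp at hs2
        exact hz1 hs2.symm
      have hr0 : r = 0 := by
        rcases mul_eq_zero.1 hr2 with h | h
        · exact h
        · exact absurd h hx2
      rw [hr0, zero_mul] at hr1
      have h := (mul_eq_zero.1 hr1.symm).resolve_left hW
      rw [Fin.sum_univ_succ, Fin.sum_univ_succ,
        Finset.sum_eq_single k (by intro j _ hj; simp [v, hj]) (by simp)] at h
      simp [v] at h
      field_simp at h
      linear_combination h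
    have hne : z 0 + z 1 ≠ 0 := by
      intro h
      have := key k0
      rw [h, mul_zero] at this
      exact (mul_ne_zero hs' (hz _)) this
    refine ⟨(e 0 + e 1) / (z 0 + z 1), by field_simp, fun k => ?_⟩
    rw [div_mul_eq_mul_div, key k]
    field_simp
  · rintro ⟨β, h0, hk⟩
    refine ⟨((∏ i, z i ^ e i) * (e 0 - β * z 0), z 0 / z 1), ?_⟩
    rintro _ ⟨v, hv, rfl⟩
    rw [Submodule.mem_span_singleton]
    refine ⟨v 0 / z 0 - v 1 / z 1, ?_⟩
    simp only [ContinuousLinearMap.coe_coe]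
    rw [aux_fderiv e 0 1 z hz]
    have hv' := (hT v).1 hv
    rw [Fin.sum_univ_succ, Fin.sum_univ_succ] at hv'
    have h2 : ∑ i : Fin n, (e i.succ.succ : ℂ) * v i.succ.succ / z i.succ.succ
        = β * ∑ i : Fin n, v i.succ.succ := by
      rw [Finset.mul_sum]
      refine Finset.sum_congr rfl fun i _ => ?_
      rw [hk]
      have := hz i.succ.succ
      field_simp
    have h3 : ∑ i, (e i : ℂ) * v i / z i =
        (v 0 / z 0 - v 1 / z 1) * (e 0 - β * z 0) := by
      rw [Fin.sum_univ_succ, Fin.sum_univ_succ, h2]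
      simp only [Fin.succ_zero_eq_one] at hv' ⊢
      have h4 : ∑ i : Fin n, v i.succ.succ = -(v 0 + v 1) := by linear_combination hv'
      have h5 : (e 1 : ℂ) = β * (z 0 + z 1) - e 0 := by linear_combination h0
      rw [h4, h5]
      field_simp
      ring
    rw [h3]
    ext
    · simp; ring
    · simp; ring


/-- Let `a ∈ ℤ^{d+2}` (`d ≥ 2`) be balanced nonzero with `a₀ + a₁ ≠ 0`,
`b = (a₀+a₁, a₂, …, a_{d+1})`, `q_b = ∏ bᵢ^{bᵢ}` (zpow) and `G = (W, z₀/z₁)` on the affine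
chart `U`.  For `t ≠ 0` and `u ∈ ℂ`, there exists `z ∈ U` with `W z = t`, `z₀/z₁ = u`
and `DG(z)|_T` of rank at most `1` iff `u ≠ 0`, `u ≠ -1` and
`u^{a₀} (u+1)^{-(a₀+a₁)} = t / q_b` (zpow). -/
theorem statement11 (d : ℕ) (hd : 2 ≤ d) (a : Fin (d + 2) → ℤ)
    (hne : ∀ i, a i ≠ 0) (hbal : ∑ i, a i = 0) (h01 : a 0 + a 1 ≠ 0)
    (b : Fin (d + 1) → ℤ) (hb : b = Fin.cons (a 0 + a 1) (fun i : Fin d => a i.succ.succ))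
    (qb : ℂ) (hqb : qb = ∏ i : Fin (d + 1), (b i : ℂ) ^ b i)
    (W : (Fin (d + 1) → ℂ) → ℂ)
    (hW : W = fun z => ∏ i : Fin (d + 1), z i ^ a i.castSucc)
    (G : (Fin (d + 1) → ℂ) → ℂ × ℂ) (hG : G = fun z => (W z, z 0 / z 1))
    (T : Submodule ℂ (Fin (d + 1) → ℂ))
    (hT : (T : Set (Fin (d + 1) → ℂ)) = {v | ∑ i, v i = 0})
    (t : ℂ) (ht : t ≠ 0) (u : ℂ) :
    (∃ z : Fin (d + 1) → ℂ, (∀ i, z i ≠ 0) ∧ ∑ i, z i = -1 ∧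
        W z = t ∧ z 0 / z 1 = u ∧
        Module.rank ℂ ↥(T.map (fderiv ℂ G z).toLinearMap) ≤ 1) ↔
      (u ≠ 0 ∧ u ≠ -1 ∧ u ^ (a 0) * (u + 1) ^ (-(a 0 + a 1)) = t / qb) := by
  obtain ⟨n, rfl⟩ : ∃ n, d = n + 1 := ⟨d - 1, by omega⟩
  subst hG hW
  have hT' : ∀ v, v ∈ T ↔ ∑ i, v i = 0 := fun v => by
    rw [← SetLike.mem_coe, hT]; rfl
  have hrank := fun z hz => aux_rank (n := n) ⟨0, by omega⟩ (fun i => a i.castSucc)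
    (by simpa using h01) z hz T hT'
  set c := a (Fin.last (n + 2)) with hc
  set α : Fin n → ℤ := fun i => a i.succ.succ.castSucc with hα
  have hc0 : c ≠ 0 := hne _
  have hc' : (c : ℂ) ≠ 0 := by exact_mod_cast hc0
  have hs' : ((a 0 + a 1 : ℤ) : ℂ) ≠ 0 := by exact_mod_cast h01
  have hsum : a 0 + a 1 + ∑ i, α i + c = 0 := by
    rw [Fin.sum_univ_castSucc, Fin.sum_univ_succ, Fin.sum_univ_succ] at hbal
    simp only [Fin.castSucc_zero, Fin.succ_zero_eq_one, Fin.castSucc_one] at hbal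
    rw [← hbal, add_assoc (a 0)]
  have hsumC : (a 0 + a 1 + ∑ i, (α i : ℂ) + c : ℂ) = 0 := by exact_mod_cast hsum
  have hq : qb = ((a 0 + a 1 : ℤ) : ℂ) ^ (a 0 + a 1) *
      ((∏ i, (α i : ℂ) ^ α i) * (c : ℂ) ^ c) := by
    rw [hqb, hb, Fin.prod_univ_succ, Fin.prod_univ_castSucc]
    simp only [Fin.cons_zero, Fin.cons_succ]
    rfl
  have hq0 : qb ≠ 0 := by
    rw [hq]
    refine mul_ne_zero (zpow_ne_zero _ hs') (mul_ne_zero ?_ (zpow_ne_zero _ hc'))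
    refine Finset.prod_ne_zero_iff.2 fun i _ => zpow_ne_zero _ ?_
    exact_mod_cast hne _
  have hval := aux_value (a 0) (a 1) c α hc0 h01 hsum u
  rw [← hq] at hval
  have hprod : ∀ z : Fin (n + 2) → ℂ, ∏ i, z i ^ a i.castSucc =
      z 0 ^ a 0 * z 1 ^ a 1 * ∏ i : Fin n, z i.succ.succ ^ α i := fun z => by
    rw [Fin.prod_univ_succ, Fin.prod_univ_succ, ← mul_assoc]; rfl
  constructor
  · rintro ⟨z, hz, hz1, hWt, hzu, hr⟩
    have hr' := (hrank z hz).1 hr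
    simp only [Fin.castSucc_zero, Fin.castSucc_one] at hr'
    obtain ⟨β, h0, hk⟩ := hr'
    have hk' : ∀ i, (α i : ℂ) = β * z i.succ.succ := hk
    rw [Fin.sum_univ_succ, Fin.sum_univ_succ, Fin.succ_zero_eq_one] at hz1
    have hS : (∑ i, (α i : ℂ)) = β * ∑ i : Fin n, z i.succ.succ := by
      rw [Finset.mul_sum]; exact Finset.sum_congr rfl fun i _ => hk' i
    have hβ : β = c := by
      rw [hS] at hsumC
      linear_combination h0 - hsumC + β * hz1
    subst hβ
    have z0 := hz 0
    have z1 := hz 1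
    have hz0u : z 0 = u * z 1 := by rw [← hzu]; field_simp
    have hu : u ≠ 0 := by rw [← hzu]; exact div_ne_zero z0 z1
    have hu1 : u + 1 ≠ 0 := by
      intro h
      apply hs'
      push_cast
      rw [h0, hz0u]
      linear_combination c * z 1 * h
    have e1 : z 1 = ((a 0 + a 1 : ℤ) : ℂ) / (c * (u + 1)) := by
      rw [eq_div_iff (mul_ne_zero hc' hu1)]
      push_cast
      rw [h0, hz0u]; ring
    have ek : ∀ i : Fin n, z i.succ.succ = (α i : ℂ) / c := fun i => by
      rw [hk' i]; field_simp
    refine ⟨hu, fun h => hu1 (by rw [h]; ring), ?_⟩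
    rw [eq_div_iff hq0, ← hval hu hu1, ← hWt]
    simp only [hprod]
    rw [hz0u, ← e1]
    simp only [ek]
  · rintro ⟨hu, hu', he⟩
    have hu1 : u + 1 ≠ 0 := fun h => hu' (by linear_combination h)
    have hm : ((a 0 + a 1 : ℤ) : ℂ) / (c * (u + 1)) ≠ 0 := div_ne_zero hs' (mul_ne_zero hc' hu1)
    let z : Fin (n + 2) → ℂ := Fin.cons (u * (((a 0 + a 1 : ℤ) : ℂ) / (c * (u + 1))))
      (Fin.cons (((a 0 + a 1 : ℤ) : ℂ) / (c * (u + 1))) (fun i => (α i : ℂ) / c))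
    have z0 : z 0 = u * (((a 0 + a 1 : ℤ) : ℂ) / (c * (u + 1))) := rfl
    have z1 : z 1 = (((a 0 + a 1 : ℤ) : ℂ) / (c * (u + 1))) := rfl
    have zk : ∀ i : Fin n, z i.succ.succ = (α i : ℂ) / c := fun i => rfl
    have hz : ∀ i, z i ≠ 0 := by
      intro i
      refine Fin.cases ?_ (fun i => Fin.cases ?_ (fun i => ?_) i) i
      · rw [z0]; exact mul_ne_zero hu hm
      · exact hm
      · rw [zk]; exact div_ne_zero (by exact_mod_cast hne _) hc'
    refine ⟨z, hz, ?_, ?_, ?_, (hrank z hz).2 ⟨c, ?_, ?_⟩⟩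
    · rw [Fin.sum_univ_succ, Fin.sum_univ_succ, Fin.succ_zero_eq_one, z0, z1]
      simp only [zk]
      rw [← Finset.sum_div]
      have : ∑ i, (α i : ℂ) = -(a 0 + a 1) - c := by linear_combination hsumC
      rw [this]
      push_cast
      field_simp
      ring
    · simp only [hprod]
      rw [z0, z1]
      simp only [zk]
      rw [hval hu hu1, he]
      field_simp
    · rw [z0, z1, mul_div_assoc, div_self hm, mul_one]
    · simp only [Fin.castSucc_zero, Fin.castSucc_one]
      rw [z0, z1]
      push_cast
      field_simp
    · intro i
      rw [zk]
      simp only [hα]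
      field_simp
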